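/- Let R be a poset function on a nonempty finite set V. Then R satisfies all of the following: (m) x,y ∈ R(u,v) implies R(x,y) ⊆ R(u,v); (b1₁) x ∈ R(u,v) and x ≠ v implies v ∉ R(u,x); (b1₂) x ∈ R(u,v) and x ≠ u implies u ∉ R(x,v); (b2₁) x ∈ R(u,v) implies R(u,x) ⊆ R(u,v); (b2₂) x ∈ R(u,v) implies R(x,v) ⊆ R(u,v); (b3₁) x ∈ R(u,v) and y ∈ R(u,x) implies x ∈ R(y,v); (b3₂) x ∈ R(u,v) and y ∈ R(x,v) implies x ∈ R(u,y); (b4) x ∈ R(u,v) implies R(u,x) ∩ R(x,v) = {x}; (Ch) x ∈ R(u,v) and y ∈ R(x,w) implies y ∈ R(u,w) or y ∈ R(v,w) or y ∈ R(u,v); (j0) x ∈ R(u,y) and y ∈ R(x,v) implies x ∈ R(u,v). -/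

import Mathlib

/-!
The relation `R u v ≠ ∅` is a partial order on `V`, and `R u v` is exactly its closed interval
`Set.Icc u v`. All the betweenness axioms are therefore statements about closed intervals.
-/

/-- Directed transit functions; the fields are the axioms (t0), (t1) and (t3). -/
structure IsDirectedTransitFunction {V : Type*} (R : V → V → Set V) : Prop where
  ne_empty_trans : ∀ u v w, R u w ≠ ∅ → R w v ≠ ∅ → R u v ≠ ∅
  endpoints_mem : ∀ u v, R u v ≠ ∅ → u ∈ R u v ∧ v ∈ R u v
  self_eq_singleton : ∀ u, R u u = {u}

/-- Poset functions; the fields added to those of a directed transit function are the axioms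
(t2a), (tr1) and (tr2). -/
structure IsPosetFunction {V : Type*} (R : V → V → Set V) : Prop
    extends IsDirectedTransitFunction R where
  eq_empty_of_ne : ∀ u v, R u v ≠ ∅ → u ≠ v → R v u = ∅
  union_subset : ∀ u v w, u ≠ v → R u w ≠ ∅ → R w v ≠ ∅ → R u w ∪ R w v ⊆ R u v
  notMem_of_eq_empty : ∀ u v w, u ≠ v → (R u w = ∅ ∨ R w v = ∅) → w ∉ R u v

theorem IsDirectedTransitFunction.self_ne_empty {V : Type*} {R : V → V → Set V}
    (hR : IsDirectedTransitFunction R) (u : V) : R u u ≠ ∅ :=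
  hR.self_eq_singleton u ▸ Set.singleton_ne_empty u

namespace IsPosetFunction

variable {V : Type*} {R : V → V → Set V}

theorem eq_of_ne_empty (hR : IsPosetFunction R) {u v : V} (huv : R u v ≠ ∅) (hvu : R v u ≠ ∅) :
    u = v :=
  not_ne_iff.mp fun hne => hvu (hR.eq_empty_of_ne u v huv hne)

theorem mem_iff (hR : IsPosetFunction R) {u v x : V} :
    x ∈ R u v ↔ R u x ≠ ∅ ∧ R x v ≠ ∅ := by
  rcases eq_or_ne u v with rfl | hne
  · rw [hR.self_eq_singleton, Set.mem_singleton_iff]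
    constructor
    · rintro rfl
      exact ⟨hR.self_ne_empty x, hR.self_ne_empty x⟩
    · rintro ⟨hux, hxu⟩
      exact hR.eq_of_ne_empty hxu hux
  · constructor
    · intro hx
      exact not_or.mp fun hempty => hR.notMem_of_eq_empty u v x hne hempty hx
    · rintro ⟨hux, hxv⟩
      exact hR.union_subset u v x hne hux hxv (Or.inl (hR.endpoints_mem u x hux).2)

/-- The partial order underlying a poset function `R`: `u ≤ v` means that `R u v` is nonempty. -/
abbrev toPartialOrder (hR : IsPosetFunction R) : PartialOrder V where
  le u v := R u v ≠ ∅
  le_refl := hR.self_ne_empty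
  le_trans u w v := hR.ne_empty_trans u v w
  le_antisymm _ _ := hR.eq_of_ne_empty

theorem exists_partialOrder_eq_Icc (hR : IsPosetFunction R) :
    ∃ _ : PartialOrder V, R = Set.Icc :=
  ⟨hR.toPartialOrder, by ext u v x; exact hR.mem_iff⟩

end IsPosetFunction

theorem stmt_8_general {V : Type*} {R : V → V → Set V} (hR : IsPosetFunction R) :
    (∀ u v x y, x ∈ R u v → y ∈ R u v → R x y ⊆ R u v) ∧
    (∀ u v x, x ∈ R u v → x ≠ v → v ∉ R u x) ∧
    (∀ u v x, x ∈ R u v → x ≠ u → u ∉ R x v) ∧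
    (∀ u v x, x ∈ R u v → R u x ⊆ R u v) ∧
    (∀ u v x, x ∈ R u v → R x v ⊆ R u v) ∧
    (∀ u v x y, x ∈ R u v → y ∈ R u x → x ∈ R y v) ∧
    (∀ u v x y, x ∈ R u v → y ∈ R x v → x ∈ R u y) ∧
    (∀ u v x, x ∈ R u v → R u x ∩ R x v = {x}) ∧
    (∀ u v w x y, x ∈ R u v → y ∈ R x w → y ∈ R u w ∨ y ∈ R v w ∨ y ∈ R u v) ∧
    (∀ u v x y, x ∈ R u y → y ∈ R x v → x ∈ R u v) := by
  obtain ⟨_, rfl⟩ := hR.exists_partialOrder_eq_Icc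
  refine ⟨?m, ?b1₁, ?b1₂, ?b2₁, ?b2₂, ?b3₁, ?b3₂, ?b4, ?Ch, ?j0⟩
  case m => exact fun u v x y hx hy => Set.Icc_subset_Icc hx.1 hy.2
  case b1₁ => exact fun u v x hx hne hv => hne (hx.2.antisymm hv.2)
  case b1₂ => exact fun u v x hx hne hu => hne (hu.1.antisymm hx.1)
  case b2₁ => exact fun u v x hx => Set.Icc_subset_Icc_right hx.2
  case b2₂ => exact fun u v x hx => Set.Icc_subset_Icc_left hx.1
  case b3₁ => exact fun u v x y hx hy => ⟨hy.2, hx.2⟩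
  case b3₂ => exact fun u v x y hx hy => ⟨hx.1, hy.1⟩
  case b4 => exact fun u v x hx => Set.Icc_inter_Icc_eq_singleton hx.1 hx.2
  case Ch => exact fun u v w x y hx hy => Or.inl (Set.Icc_subset_Icc_left hx.1 hy)
  case j0 => exact fun u v x y hx hy => Set.Icc_subset_Icc_right hy.2 hx

/-- Every poset function `R` on a nonempty finite set satisfies the
betweenness axioms (m), (b1₁), (b1₂), (b2₁), (b2₂), (b3₁), (b3₂), (b4), (Ch), (j0). -/
theorem stmt_8 {V : Type*} [Fintype V] [Nonempty V]
    (R : V → V → Set V)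
    -- (t0)
    (t0 : ∀ u v w, R u w ≠ ∅ → R w v ≠ ∅ → R u v ≠ ∅)
    -- (t1)
    (t1 : ∀ u v, R u v ≠ ∅ → u ∈ R u v ∧ v ∈ R u v)
    -- (t3)
    (t3 : ∀ u, R u u = {u})
    -- (t2a)
    (t2a : ∀ u v, R u v ≠ ∅ → u ≠ v → R v u = ∅)
    -- (tr1)
    (tr1 : ∀ u v w, u ≠ v → R u w ≠ ∅ → R w v ≠ ∅ → R u w ∪ R w v ⊆ R u v)
    -- (tr2)
    (tr2 : ∀ u v w, u ≠ v → (R u w = ∅ ∨ R w v = ∅) → w ∉ R u v) :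
    -- (m)
    (∀ u v x y, x ∈ R u v → y ∈ R u v → R x y ⊆ R u v) ∧
    -- (b1₁)
    (∀ u v x, x ∈ R u v → x ≠ v → v ∉ R u x) ∧
    -- (b1₂)
    (∀ u v x, x ∈ R u v → x ≠ u → u ∉ R x v) ∧
    -- (b2₁)
    (∀ u v x, x ∈ R u v → R u x ⊆ R u v) ∧
    -- (b2₂)
    (∀ u v x, x ∈ R u v → R x v ⊆ R u v) ∧
    -- (b3₁)
    (∀ u v x y, x ∈ R u v → y ∈ R u x → x ∈ R y v) ∧
    -- (b3₂)
    (∀ u v x y, x ∈ R u v → y ∈ R x v → x ∈ R u y) ∧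
    -- (b4)
    (∀ u v x, x ∈ R u v → R u x ∩ R x v = {x}) ∧
    -- (Ch)
    (∀ u v w x y, x ∈ R u v → y ∈ R x w → y ∈ R u w ∨ y ∈ R v w ∨ y ∈ R u v) ∧
    -- (j0)
    (∀ u v x y, x ∈ R u y → y ∈ R x v → x ∈ R u v) :=
  stmt_8_general ⟨⟨t0, t1, t3⟩, t2a, tr1, tr2⟩
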